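/- arXiv:2412.14272 — 7 statements merged into one kernel-verified Lean document; each statement's English description precedes it below -/
import Mathlib

section
/- Let S be a finite nonempty index set, let F_m > 0, and for each k ∈ S let F_k > 0 and Δc_k ≤ 0 be real numbers. Define g_k(x) = x·F_k/(F_m + x·Δc_k) and q(x) = x + Σ_{k∈S} g_k(x). Let f_b = min over k ∈ S with Δc_k < 0 of (−F_m/Δc_k), taken as +∞ if no such k exists. Then q is strictly monotonically increasing on the open interval (0, f_b). -/
/-!
On the interval every denominator `F_m + x·Δc_k` is positive, and for `x < y` cross-multiplying
`x·F_k/(F_m + x·Δc_k) ≤ y·F_k/(F_m + y·Δc_k)` cancels the `x·y·F_k·Δc_k` terms and leaves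
`x·F_k·F_m ≤ y·F_k·F_m`. So each summand is monotone, and the term `x` makes the sum strictly so.
-/


/-- Strict monotonicity of `q(x) = x + Σ_{k∈S} x·F_k/(F_m + x·Δc_k)` on `(0, f_b)`,
where `f_b = min_{k∈S, Δc_k<0} (-F_m/Δc_k)` (taken as `+∞` if no such `k` exists);
the interval is encoded as `{x | 0 < x ∧ ∀ k ∈ S, Δc k < 0 → x < -F_m/Δc k}`. -/
theorem stmt_2 {ι : Type*} (S : Finset ι) (hS : S.Nonempty) (Fm : ℝ) (hFm : 0 < Fm)
    (F Δc : ι → ℝ) (hF : ∀ k ∈ S, 0 < F k) (hΔc : ∀ k ∈ S, Δc k ≤ 0) :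
    StrictMonoOn (fun x : ℝ => x + ∑ k ∈ S, x * F k / (Fm + x * Δc k))
      {x : ℝ | 0 < x ∧ ∀ k ∈ S, Δc k < 0 → x < -Fm / Δc k} := by
  have hpos : ∀ x : ℝ, (∀ k ∈ S, Δc k < 0 → x < -Fm / Δc k) →
      ∀ k ∈ S, 0 < Fm + x * Δc k := by
    intro x hx k hk
    rcases (hΔc k hk).lt_or_eq with h | h
    · have := (lt_div_iff_of_neg h).1 (hx k hk h)
      linarith
    · simpa [h] using hFm
  rintro x ⟨-, hx⟩ y ⟨-, hy⟩ hxy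
  refine add_lt_add_of_lt_of_le hxy (Finset.sum_le_sum fun k hk => ?_)
  rw [div_le_div_iff₀ (hpos x hx k hk) (hpos y hy k hk)]
  have := mul_le_mul_of_nonneg_right hxy.le (mul_pos (hF k hk) hFm).le
  linarith
end

section
/- Let S be a finite nonempty index set, let F_m > 0, and for each k ∈ S let F_k > 0 and Δc_k ≤ 0 be real numbers. Define q(x) = x + Σ_{k∈S} x·F_k/(F_m + x·Δc_k) and f_b = min over k ∈ S with Δc_k < 0 of (−F_m/Δc_k), taken as +∞ if no such k exists. Then for every f_max > 0 there exists a unique x₀ ∈ (0, f_b) with q(x₀) = f_max. -/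
/-!
On the interval `(0, f_b)` all denominators `F_m + x·Δc_k` are positive, and there each summand of
`q` is nondecreasing in `x` while the leading term `x` is strictly increasing
(`load_term_mono`); this gives uniqueness. For existence, `q(0) = 0 < f_max`, and a point where
`q ≥ f_max` is obtained without any limit at `f_b`: the `k`-th summand alone equals `f_max` at
`x_k = f_max·F_m/(F_k - f_max·Δc_k)`, where its denominator is positive. At the smallest of the
`x_k` every denominator is still positive, since `Δc ≤ 0`, and the minimizing summand already
contributes `f_max`. The intermediate value theorem concludes.
-/

/-- The condition `x < -a/d` for `d < 0` says that the denominator `a + x·d` is positive; for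
`d = 0` that positivity is automatic. -/
lemma denom_pos_iff {a d x : ℝ} (ha : 0 < a) (hd : d ≤ 0) :
    (d < 0 → x < -a / d) ↔ 0 < a + x * d := by
  rcases hd.lt_or_eq with h | rfl
  · simp only [h, forall_const, lt_div_iff_of_neg h]
    constructor <;> intro _ <;> linarith
  · simpa using ha

lemma load_term_mono {a f d x y : ℝ} (ha : 0 < a) (hf : 0 < f) (hxy : x ≤ y)
    (hx : 0 < a + x * d) (hy : 0 < a + y * d) :
    x * f / (a + x * d) ≤ y * f / (a + y * d) := by
  rw [div_le_div_iff₀ hx hy]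
  nlinarith [mul_le_mul_of_nonneg_left hxy (mul_pos ha hf).le]

/-- Existence and uniqueness of a root of `q(x₀) = f_max` in `(0, f_b)`, where
`q(x) = x + Σ_{k∈S} x·F_k/(F_m + x·Δc_k)` and the interval `(0, f_b)`, with
`f_b = min_{k∈S, Δc_k<0} (-F_m/Δc_k)` (taken as `+∞` if no such `k`), is encoded
as `{x | 0 < x ∧ ∀ k ∈ S, Δc k < 0 → x < -F_m/Δc k}`. -/
theorem stmt_4 {ι : Type*} (S : Finset ι) (hS : S.Nonempty) (Fm : ℝ) (hFm : 0 < Fm)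
    (F Δc : ι → ℝ) (hF : ∀ k ∈ S, 0 < F k) (hΔc : ∀ k ∈ S, Δc k ≤ 0)
    (fmax : ℝ) (hfmax : 0 < fmax) :
    ∃! x₀ : ℝ, (0 < x₀ ∧ ∀ k ∈ S, Δc k < 0 → x₀ < -Fm / Δc k) ∧
      x₀ + ∑ k ∈ S, x₀ * F k / (Fm + x₀ * Δc k) = fmax := by
  have hdom : ∀ x : ℝ, (∀ k ∈ S, Δc k < 0 → x < -Fm / Δc k) ↔ ∀ k ∈ S, 0 < Fm + x * Δc k :=
    fun x => forall₂_congr fun k hk => denom_pos_iff hFm (hΔc k hk)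
  simp only [hdom]
  have hmono : ∀ x y : ℝ, (∀ k ∈ S, 0 < Fm + x * Δc k) → (∀ k ∈ S, 0 < Fm + y * Δc k) → x < y →
      x + ∑ k ∈ S, x * F k / (Fm + x * Δc k) < y + ∑ k ∈ S, y * F k / (Fm + y * Δc k) :=
    fun x y hx hy hxy => add_lt_add_of_lt_of_le hxy <| Finset.sum_le_sum fun k hk =>
      load_term_mono hFm (hF k hk) hxy.le (hx k hk) (hy k hk)
  have hE : ∀ k ∈ S, 0 < F k - fmax * Δc k := fun k hk => by
    nlinarith [hF k hk, mul_nonneg hfmax.le (neg_nonneg.mpr (hΔc k hk))]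
  obtain ⟨j, hj, hmin⟩ := S.exists_min_image (fun k => fmax * Fm / (F k - fmax * Δc k)) hS
  -- `b` is the smallest of the points at which a single summand equals `fmax`.
  set b := fmax * Fm / (F j - fmax * Δc j) with hb
  have hb0 : 0 < b := div_pos (mul_pos hfmax hFm) (hE j hj)
  have hden : ∀ x ≤ b, ∀ k ∈ S, 0 < Fm + x * Δc k := fun x hx k hk => by
    have hEk := hE k hk
    have h1 : Fm + fmax * Fm / (F k - fmax * Δc k) * Δc k = Fm * F k / (F k - fmax * Δc k) := by
      field_simp
      ring
    have h2 : 0 < Fm * F k / (F k - fmax * Δc k) := div_pos (mul_pos hFm (hF k hk)) hEk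
    linarith [mul_le_mul_of_nonpos_right (hx.trans (hmin k hk)) (hΔc k hk)]
  have hbterm : b * F j / (Fm + b * Δc j) = fmax := by
    have hmul : b * (F j - fmax * Δc j) = fmax * Fm := div_mul_cancel₀ _ (hE j hj).ne'
    rw [div_eq_iff (hden b le_rfl j hj).ne']
    linarith
  have hqb : fmax ≤ b + ∑ k ∈ S, b * F k / (Fm + b * Δc k) := by
    have := Finset.single_le_sum (f := fun k => b * F k / (Fm + b * Δc k))
      (fun k hk => div_nonneg (mul_pos hb0 (hF k hk)).le (hden b le_rfl k hk).le) hj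
    simp only [hbterm] at this
    linarith
  have hcont : ContinuousOn (fun x : ℝ => x + ∑ k ∈ S, x * F k / (Fm + x * Δc k))
      (Set.Icc 0 b) :=
    continuousOn_id.add <| continuousOn_finset_sum _ fun k hk =>
      ContinuousOn.div (by fun_prop) (by fun_prop) fun x hx => (hden x hx.2 k hk).ne'
  obtain ⟨x, hx, hqx⟩ := intermediate_value_Icc hb0.le hcont
    (show fmax ∈ Set.Icc _ _ from ⟨by simpa using hfmax.le, hqb⟩)
  have hqx' : x + ∑ k ∈ S, x * F k / (Fm + x * Δc k) = fmax := hqx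
  have hx0 : x ≠ 0 := by
    rintro rfl
    simp at hqx'
    exact hfmax.ne hqx'
  refine ⟨x, ⟨⟨lt_of_le_of_ne hx.1 hx0.symm, hden x hx.2⟩, hqx'⟩, ?_⟩
  rintro y ⟨⟨-, hy⟩, hqy⟩
  rcases lt_trichotomy y x with h | h | h
  · exact absurd (hmono y x hy (hden x hx.2) h) (by rw [hqy, hqx']; exact lt_irrefl _)
  · exact h
  · exact absurd (hmono x y (hden x hx.2) hy h) (by rw [hqy, hqx']; exact lt_irrefl _)
end

section
/- Let K be a finite nonempty index set, and for each k ∈ K let C_k ∈ ℝ and F_k > 0. Fix f_max > 0 and consider the set of allocations f : K → ℝ with f_k > 0 for all k and Σ_k f_k = f_max. Then the function f ↦ max_k (C_k + F_k/f_k) attains its infimum over this set, and at any minimizer f* the values C_k + F_k/f*_k are equal for all k ∈ K. -/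
/-!
The idea is to find the common value of the inference times first. On `(max C, ∞)` the function
`T ↦ ∑ k, F k / (T - C k)` is continuous and takes values above and below `fmax`, so some level
`T` satisfies `∑ k, F k / (T - C k) = fmax` (`exists_level`). The allocation
`f k = F k / (T - C k)` is then feasible and gives every device the value `T`.
Conversely, `C k + F k / g k ≤ T` forces `g k ≥ F k / (T - C k)`; since both sides sum to `fmax`,
a feasible `g` whose values are all at most `T` has all its values equal to `T`
(`eq_level_of_le`). Hence the minimum is `T`, and any minimizer has all its values equal to `T`.
-/

/-- A water-filling level exists. With `M = C m` the largest of the `C k`, the sum is at least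
`fmax` at `M + F m / fmax` and at most `fmax` at `M + (∑ k, F k) / fmax`. -/
lemma exists_level {ι : Type*} (K : Finset ι) (hK : K.Nonempty) (C F : ι → ℝ)
    (hF : ∀ k ∈ K, 0 < F k) (fmax : ℝ) (hfmax : 0 < fmax) :
    ∃ T : ℝ, (∀ k ∈ K, C k < T) ∧ ∑ k ∈ K, F k / (T - C k) = fmax := by
  obtain ⟨m, hm, hmax⟩ := K.exists_max_image C hK
  have hFm := hF m hm
  have hS : 0 < ∑ k ∈ K, F k := Finset.sum_pos hF hK
  have hmS : F m ≤ ∑ k ∈ K, F k :=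
    Finset.single_le_sum (f := F) (fun k hk => (hF k hk).le) hm
  have hpos : 0 < F m / fmax := div_pos hFm hfmax
  have hle : C m + F m / fmax ≤ C m + (∑ k ∈ K, F k) / fmax := by gcongr
  have hlt : ∀ T, C m + F m / fmax ≤ T → ∀ k ∈ K, C k < T := fun T hT k hk => by
    linarith [hmax k hk]
  have hcont : ContinuousOn (fun T : ℝ => ∑ k ∈ K, F k / (T - C k))
      (Set.Icc (C m + F m / fmax) (C m + (∑ k ∈ K, F k) / fmax)) := by
    refine continuousOn_finsetSum _ fun k hk => ?_
    refine ContinuousOn.div (by fun_prop) (by fun_prop) fun T hT => ?_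
    exact (sub_pos.2 (hlt T hT.1 k hk)).ne'
  have hmem : fmax ∈ Set.Icc
      (∑ k ∈ K, F k / (C m + (∑ k ∈ K, F k) / fmax - C k))
      (∑ k ∈ K, F k / (C m + F m / fmax - C k)) := by
    constructor
    · calc ∑ k ∈ K, F k / (C m + (∑ k ∈ K, F k) / fmax - C k)
          ≤ ∑ k ∈ K, F k / ((∑ k ∈ K, F k) / fmax) := by
            refine Finset.sum_le_sum fun k hk => ?_
            exact div_le_div_of_nonneg_left (hF k hk).le (div_pos hS hfmax)
              (by linarith [hmax k hk])
        _ = fmax := by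
            rw [← Finset.sum_div]
            field_simp
    · calc fmax = F m / (C m + F m / fmax - C m) := by
            rw [add_sub_cancel_left]
            field_simp
        _ ≤ _ := Finset.single_le_sum (f := fun k => F k / (C m + F m / fmax - C k))
            (fun k hk => (div_pos (hF k hk) (sub_pos.2 (hlt _ le_rfl k hk))).le) hm
  obtain ⟨T, hT, hsum⟩ := intermediate_value_Icc' hle hcont hmem
  exact ⟨T, hlt T hT.1, hsum⟩

/-- Each `g k` is at least `F k / (T - C k)`, and equality of the sums forces equality
termwise. -/
lemma eq_level_of_le {ι : Type*} {K : Finset ι} {C F g : ι → ℝ} {T fmax : ℝ}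
    (hF : ∀ k ∈ K, 0 < F k) (hT : ∀ k ∈ K, C k < T)
    (hsum : ∑ k ∈ K, F k / (T - C k) = fmax)
    (hg : ∀ k ∈ K, 0 < g k) (hgsum : ∑ k ∈ K, g k = fmax)
    (hle : ∀ k ∈ K, C k + F k / g k ≤ T) : ∀ k ∈ K, C k + F k / g k = T := by
  have hge : ∀ k ∈ K, F k / (T - C k) ≤ g k := fun k hk => by
    have h : F k / g k ≤ T - C k := by linarith [hle k hk]
    rw [div_le_iff₀ (hg k hk)] at h
    rwa [div_le_iff₀' (sub_pos.2 (hT k hk))]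
  have heq := (Finset.sum_eq_sum_iff_of_le hge).1 (hsum.trans hgsum.symm)
  intro k hk
  rw [← heq k hk, div_div_cancel₀ (hF k hk).ne']
  ring

/-- The min-max problem `min_f max_k (C_k + F_k/f_k)` over positive allocations
summing to `f_max` attains its infimum, and at any minimizer the inference times
`C_k + F_k/f_k` are equal across all devices. -/
theorem stmt_8 {ι : Type*} (K : Finset ι) (hK : K.Nonempty) (C F : ι → ℝ)
    (hF : ∀ k ∈ K, 0 < F k) (fmax : ℝ) (hfmax : 0 < fmax) :
    (∃ f : ι → ℝ, (∀ k ∈ K, 0 < f k) ∧ (∑ k ∈ K, f k = fmax) ∧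
      ∀ g : ι → ℝ, (∀ k ∈ K, 0 < g k) → (∑ k ∈ K, g k = fmax) →
        (K.sup' hK fun k => C k + F k / f k) ≤ K.sup' hK fun k => C k + F k / g k) ∧
    (∀ f : ι → ℝ, (∀ k ∈ K, 0 < f k) → (∑ k ∈ K, f k = fmax) →
      (∀ g : ι → ℝ, (∀ k ∈ K, 0 < g k) → (∑ k ∈ K, g k = fmax) →
        (K.sup' hK fun k => C k + F k / f k) ≤ K.sup' hK fun k => C k + F k / g k) →
      ∀ k ∈ K, ∀ j ∈ K, C k + F k / f k = C j + F j / f j) := by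
  obtain ⟨T, hT, hsum⟩ := exists_level K hK C F hF fmax hfmax
  have hpos : ∀ k ∈ K, 0 < F k / (T - C k) := fun k hk =>
    div_pos (hF k hk) (sub_pos.2 (hT k hk))
  have hval : (K.sup' hK fun k => C k + F k / (F k / (T - C k))) ≤ T :=
    Finset.sup'_le _ _ fun k hk => by
      rw [div_div_cancel₀ (hF k hk).ne']
      linarith
  refine ⟨⟨fun k => F k / (T - C k), hpos, hsum, fun g hg hgsum => hval.trans ?_⟩, ?_⟩
  · by_contra! hlt
    have hltk : ∀ k ∈ K, C k + F k / g k < T := (Finset.sup'_lt_iff hK).1 hlt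
    obtain ⟨k, hk⟩ := hK
    exact (hltk k hk).ne
      (eq_level_of_le hF hT hsum hg hgsum (fun j hj => (hltk j hj).le) k hk)
  · intro f hf hfsum hmin k hk j hj
    have hle : ∀ i ∈ K, C i + F i / f i ≤ T :=
      (Finset.sup'_le_iff hK _).1 ((hmin _ hpos hsum).trans hval)
    have heq := eq_level_of_le hF hT hsum hf hfsum hle
    rw [heq k hk, heq j hj]
end

section
/- Let K ≥ 1, let C : {1,…,K} → ℝ and F : {1,…,K} → ℝ with F_k ≥ 0, and let f > 0. Define I_1 = C_1 + F_1/f and I_k = max(I_{k−1}, C_k) + F_k/f for 2 ≤ k ≤ K. Suppose j with 2 ≤ j ≤ K satisfies C_j > I_{j−1} (a break occurs at j) and C_i ≤ I_{i−1} for all j < i ≤ K (no break after j). Then I_K = C_j + Σ_{i=j}^{K} F_i/f. -/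
/-- Equation (18): if a break occurs at position `j` and no break occurs after `j`,
then `I_K = C_j + Σ_{i=j}^{K} F_i/f`. -/
theorem stmt_10 (K : ℕ) (hK : 1 ≤ K) (C F : ℕ → ℝ)
    (hF : ∀ k, 1 ≤ k → k ≤ K → 0 ≤ F k) (f : ℝ) (hf : 0 < f)
    (I : ℕ → ℝ) (hI1 : I 1 = C 1 + F 1 / f)
    (hIk : ∀ k, 2 ≤ k → k ≤ K → I k = max (I (k - 1)) (C k) + F k / f)
    (j : ℕ) (hj2 : 2 ≤ j) (hjK : j ≤ K)
    (hbreak : I (j - 1) < C j)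
    (hnb : ∀ i, j < i → i ≤ K → C i ≤ I (i - 1)) :
    I K = C j + ∑ i ∈ Finset.Icc j K, F i / f := by
  -- Past the break every maximum is attained by the previous delay, so each step only adds `F i / f`.
  have key : ∀ n, j ≤ n → n ≤ K → I n = C j + ∑ i ∈ Finset.Icc j n, F i / f := by
    intro n hn
    induction n, hn using Nat.le_induction with
    | base =>
      intro _
      rw [hIk j hj2 hjK, max_eq_right hbreak.le, Finset.Icc_self, Finset.sum_singleton]
    | succ n hn ih =>
      intro hnK
      have hC : C (n + 1) ≤ I n := hnb (n + 1) (by omega) hnK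
      rw [hIk (n + 1) (by omega) hnK, Nat.add_sub_cancel, max_eq_left hC, ih (by omega),
        Finset.sum_Icc_succ_top (by omega), add_assoc]
  exact key K hjK le_rfl
end

section
/- Let K ≥ 1, let C : {1,…,K} → ℝ and F : {1,…,K} → ℝ with F_k ≥ 0, and let f > 0. Define I_1 = C_1 + F_1/f and I_k = max(I_{k−1}, C_k) + F_k/f for 2 ≤ k ≤ K. Suppose j with 2 ≤ j ≤ K satisfies C_j > I_{j−1} and C_i ≤ I_{i−1} for all j < i ≤ K. Then I_K > I_{j−1} + Σ_{i=j}^{K} F_i/f. -/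
/-!
At the break `j` the recursion gives `I j = C j + F j / f`, and past `j` the maximum is always
`I (m - 1)`, so each later step adds exactly `F m / f`. Hence
`I m = C j + ∑ i ∈ Icc j m, F i / f` for `j ≤ m ≤ K`, and `C j > I (j - 1)` gives the strict
inequality at `m = K`.
-/

/-- Inequality (23): eliminating the last break strictly improves the delay,
`I_K > I_{j−1} + Σ_{i=j}^{K} F_i/f`. -/
theorem stmt_11 (K : ℕ) (hK : 1 ≤ K) (C F : ℕ → ℝ)
    (hF : ∀ k, 1 ≤ k → k ≤ K → 0 ≤ F k) (f : ℝ) (hf : 0 < f)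
    (I : ℕ → ℝ) (hI1 : I 1 = C 1 + F 1 / f)
    (hIk : ∀ k, 2 ≤ k → k ≤ K → I k = max (I (k - 1)) (C k) + F k / f)
    (j : ℕ) (hj2 : 2 ≤ j) (hjK : j ≤ K)
    (hbreak : I (j - 1) < C j)
    (hnb : ∀ i, j < i → i ≤ K → C i ≤ I (i - 1)) :
    I K > I (j - 1) + ∑ i ∈ Finset.Icc j K, F i / f := by
  have key : ∀ m, j ≤ m → m ≤ K → I m = C j + ∑ i ∈ Finset.Icc j m, F i / f := by
    intro m hm
    induction m, hm using Nat.le_induction with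
    | base =>
      intro h
      rw [hIk j hj2 h, max_eq_right hbreak.le, Finset.Icc_self, Finset.sum_singleton]
    | succ m hm ih =>
      intro h
      have hC := hnb (m + 1) (by omega) h
      rw [hIk (m + 1) (by omega) h, max_eq_left hC, Nat.add_sub_cancel, ih (by omega),
        Finset.sum_Icc_succ_top (by omega), add_assoc]
  rw [key K hjK le_rfl]
  linarith
end

section
/- Let K ≥ 1, let C : {1,…,K} → ℝ and F : {1,…,K} → ℝ with F_k ≥ 0, and let f > 0. Define I_1 = C_1 + F_1/f and I_k = max(I_{k−1}, C_k) + F_k/f for 2 ≤ k ≤ K. Suppose j with 2 ≤ j ≤ K − 1 satisfies C_j > I_{j−1}, C_i ≤ I_{i−1} for all j < i ≤ K, and C_{j+1} < I_j strictly. Then I_K > C_{j+1} + Σ_{i=j+1}^{K} F_i/f. -/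
/-- Inequality (24): a queue whose last break occurs one position later is
strictly better, `I_K > C_{j+1} + Σ_{i=j+1}^{K} F_i/f`. -/
theorem stmt_12 (K : ℕ) (hK : 1 ≤ K) (C F : ℕ → ℝ)
    (hF : ∀ k, 1 ≤ k → k ≤ K → 0 ≤ F k) (f : ℝ) (hf : 0 < f)
    (I : ℕ → ℝ) (hI1 : I 1 = C 1 + F 1 / f)
    (hIk : ∀ k, 2 ≤ k → k ≤ K → I k = max (I (k - 1)) (C k) + F k / f)
    (j : ℕ) (hj2 : 2 ≤ j) (hjK : j ≤ K - 1)
    (hbreak : I (j - 1) < C j)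
    (hnb : ∀ i, j < i → i ≤ K → C i ≤ I (i - 1))
    (hstrict : C (j + 1) < I j) :
    I K > C (j + 1) + ∑ i ∈ Finset.Icc (j + 1) K, F i / f := by
  -- The bound holds at every position `n` from `j` on: at `n = j` the sum is empty and the claim is
  -- `hstrict`, and each later step adds `F (n + 1) / f`, since `I n ≤ max (I n) (C (n + 1))`.
  have key : ∀ n, j ≤ n → n ≤ K →
      C (j + 1) + ∑ i ∈ Finset.Icc (j + 1) n, F i / f < I n := by
    intro n hn
    induction n, hn using Nat.le_induction with
    | base => intro _; simpa using hstrict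
    | succ n hn ih =>
      intro hK'
      have h1 := ih (by omega)
      have h2 := hIk (n + 1) (by omega) hK'
      rw [Nat.add_sub_cancel] at h2
      rw [Finset.sum_Icc_succ_top (by omega), h2]
      linarith [le_max_left (I n) (C (n + 1))]
  exact key K (by omega) le_rfl
end

section
/- Let a > 0, b > 0, c > 0 and w ∈ ℝ. The function J(B, f) = a/(B·log(1 + c/B)) + w + b/f (natural logarithm) is convex on the set {(B, f) : B > 0, f > 0} ⊆ ℝ². -/
open Real

/-!
The rate `B ↦ B * log (1 + c / B)` is the perspective of the concave function `u ↦ log (1 + u)`,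
hence concave, and it is positive for `B > 0`. The reciprocal of a positive concave function is
convex, because `x ↦ x⁻¹` is convex and antitone on the positive reals. Applied to the rate and to
the identity, this makes `J` a nonnegative combination of convex functions of one coordinate each,
plus a constant (`concaveOn_rate`, `convexOn_inv_of_concaveOn`).
-/

theorem convexOn_inv_of_concaveOn {E : Type*} [AddCommGroup E] [Module ℝ E] {s : Set E}
    {g : E → ℝ} (hg : ConcaveOn ℝ s g) (hpos : ∀ x ∈ s, 0 < g x) :
    ConvexOn ℝ s (fun x => (g x)⁻¹) := by
  refine ⟨hg.1, fun x hx y hy p q hp hq hpq => ?_⟩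
  have hinv : ConvexOn ℝ (Set.Ioi 0) (fun z : ℝ => z⁻¹) := by
    simpa only [zpow_neg_one] using convexOn_zpow (𝕜 := ℝ) (-1)
  have hmem : 0 < p • g x + q • g y :=
    (convex_Ioi (0 : ℝ)) (hpos x hx) (hpos y hy) hp hq hpq
  exact (inv_anti₀ hmem (hg.2 hx hy hp hq hpq)).trans
    (hinv.2 (hpos x hx) (hpos y hy) hp hq hpq)

theorem concaveOn_rate {c : ℝ} (hc : 0 < c) :
    ConcaveOn ℝ (Set.Ioi 0) (fun x : ℝ => x * Real.log (1 + c / x)) := by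
  refine ⟨convex_Ioi 0, fun x hx y hy p q hp hq hpq => ?_⟩
  have hz : 0 < p • x + q • y := (convex_Ioi (0 : ℝ)) hx hy hp hq hpq
  simp only [Set.mem_Ioi, smul_eq_mul] at hx hy hz ⊢
  -- `1 + c / z` is the mean of `1 + c / x` and `1 + c / y` with weights `p * x / z`, `q * y / z`.
  have key := strictConcaveOn_log_Ioi.concaveOn.2
    (show 1 + c / x ∈ Set.Ioi (0 : ℝ) by simp only [Set.mem_Ioi]; positivity)
    (show 1 + c / y ∈ Set.Ioi (0 : ℝ) by simp only [Set.mem_Ioi]; positivity)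
    (show 0 ≤ p * x / (p * x + q * y) by positivity)
    (show 0 ≤ q * y / (p * x + q * y) by positivity)
    (by rw [← add_div, div_self hz.ne'])
  have hmean : p * x / (p * x + q * y) * (1 + c / x) + q * y / (p * x + q * y) * (1 + c / y)
      = 1 + c / (p * x + q * y) := by
    have hnum : p * x * (1 + c / x) + q * y * (1 + c / y) = p * x + q * y + c := by
      field_simp
      linear_combination c * hpq
    rw [div_mul_eq_mul_div, div_mul_eq_mul_div, ← add_div, hnum, add_div, div_self hz.ne']
  simp only [smul_eq_mul] at key
  rw [hmean] at key
  calc p * (x * Real.log (1 + c / x)) + q * (y * Real.log (1 + c / y))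
      = (p * x + q * y) * (p * x / (p * x + q * y) * Real.log (1 + c / x)
          + q * y / (p * x + q * y) * Real.log (1 + c / y)) := by
        field_simp
    _ ≤ _ := mul_le_mul_of_nonneg_left key hz.le

/-- Joint convexity of the inference delay
`J(B, f) = a/(B·log(1 + c/B)) + w + b/f` on `{(B, f) : B > 0, f > 0}`. -/
theorem stmt_17 (a b c w : ℝ) (ha : 0 < a) (hb : 0 < b) (hc : 0 < c) :
    ConvexOn ℝ {p : ℝ × ℝ | 0 < p.1 ∧ 0 < p.2}
      (fun p : ℝ × ℝ => a / (p.1 * Real.log (1 + c / p.1)) + w + b / p.2) := by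
  have hrate : ∀ x ∈ Set.Ioi (0 : ℝ), 0 < x * Real.log (1 + c / x) := fun x hx =>
    mul_pos hx (Real.log_pos (lt_add_of_pos_right 1 (div_pos hc hx)))
  have hS : Convex ℝ {p : ℝ × ℝ | 0 < p.1 ∧ 0 < p.2} :=
    (convex_Ioi (0 : ℝ)).prod (convex_Ioi (0 : ℝ))
  have h1 := (((convexOn_inv_of_concaveOn (concaveOn_rate hc) hrate).smul ha.le).comp_linearMap
    (LinearMap.fst ℝ ℝ ℝ)).subset (fun p hp => hp.1) hS
  have h2 := (((convexOn_inv_of_concaveOn (concaveOn_id (convex_Ioi (0 : ℝ)))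
    (fun x hx => hx)).smul hb.le).comp_linearMap
    (LinearMap.snd ℝ ℝ ℝ)).subset (fun p hp => hp.2) hS
  exact (h1.add_const w).add h2
end
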